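/- arXiv:2207.14609 — 2 statements merged into one kernel-verified Lean document; each statement's English description precedes it below -/
import Mathlib

section
/- Let ξ₁ < … < ξ_N be real numbers and, for j = 1, …, m, let g_j(t) = q_{1,j}·t + q_{0,j} + Σ_{ℓ=1}^{N} α_{j,ℓ}·σ(t − ξ_ℓ). Let f(t) = c·t + b + Σ_{j=1}^{m} a_j·σ(g_j(t)). Define μ_{j,ν} := q_{1,j} + Σ_{r=1}^{ν} α_{j,r} and η_{j,ν} := q_{0,j} − Σ_{r=1}^{ν} α_{j,r}·ξ_r for ν = 0, …, N, and set ξ₀ := −∞, ξ_{N+1} := +∞. Then for all t ∈ ℝ: f(t) = q₁·t + q₀ + Σ_{ℓ=1}^{N} β_ℓ·σ(t − ξ_ℓ) + Σ_{j=1}^{m} Σ_{ν ∈ S_j} a_j·|μ_{j,ν}|·σ(t + η_{j,ν}/μ_{j,ν}), where S_j := { ν ∈ {0, …, N} : μ_{j,ν} ≠ 0 and −η_{j,ν}/μ_{j,ν} ∈ (ξ_ν, ξ_{ν+1}) }, β_ℓ = Σ_{j=1}^{m} a_j·( α_{j,ℓ} if g_j(ξ_ℓ) > 0; σ(μ_{j,ℓ})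 + σ(−μ_{j,ℓ−1}) if g_j(ξ_ℓ) = 0; 0 if g_j(ξ_ℓ) < 0 ), q₁ = c − Σ_{j=1}^{m} a_j·σ(−q_{1,j}), and q₀ = b + Σ_{j=1}^{m} a_j·( q_{0,j} if q_{1,j} < 0; σ(q_{0,j}) if q_{1,j} = 0; 0 if q_{1,j} > 0 ). -/
/-- The ReLU function `σ(x) = max(x,0)`. -/
noncomputable def relu (x : ℝ) : ℝ := max x 0

/-!
Let `g_k` be the spline `g` with only its first `k` ramps, so `g_N = g`, and `σ ∘ g` telescopes
along `g_0, …, g_N`. For `t ≤ ξ_ℓ` both `g_ℓ` and `g_{ℓ-1}` agree with `g`, and for `t ≥ ξ_ℓ` they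
are the affine functions extending the two pieces of `g` that meet at `ξ_ℓ`. To the right of a point
`x`, the composite of `σ` with an affine function is its value at `x`, plus a slope times `t - x`,
plus a ramp at the zero of the affine function if that zero lies ahead. Hence the `ℓ`-th increment
of `σ ∘ g_k` is a kink at `ξ_ℓ`, plus the ramp at the zero of the right piece if that zero exceeds
`ξ_ℓ`, minus the ramp at the zero of the left piece if that zero is at least `ξ_ℓ`. In the sum over
`ℓ`, the ramp of a piece survives exactly when its zero lies inside the interval of that piece.
-/

theorem relu_of_nonneg {x : ℝ} (hx : 0 ≤ x) : relu x = x := max_eq_left hx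

theorem relu_of_nonpos {x : ℝ} (hx : x ≤ 0) : relu x = 0 := max_eq_right hx

theorem relu_sub_relu_neg (x : ℝ) : relu x - relu (-x) = x := by
  simp only [relu, max_zero_sub_max_neg_zero_eq_self]

theorem relu_mul_of_nonneg (p : ℝ) {y : ℝ} (hy : 0 ≤ y) : relu (p * y) = relu p * y := by
  rw [relu, relu, max_mul_of_nonneg _ _ hy, zero_mul]

/-- The ramp which starts at the zero `-(e / p)` of the affine function `t ↦ p * t + e` and has
slope `|p|`; it vanishes identically for `p = 0`. -/
noncomputable def zeroRamp (p e t : ℝ) : ℝ := |p| * relu (t + e / p)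

/-- The right derivative at `x` of `t ↦ relu (p * t + e)`, as a function of the slope `p` and of
the value `v = p * x + e`. -/
noncomputable def reluRightSlope (p v : ℝ) : ℝ :=
  if 0 < v then p else if v = 0 then relu p else 0

/-- The left derivative at `x` of `t ↦ relu (p * t + e)`, as a function of the slope `p` and of
the value `v = p * x + e`. -/
noncomputable def reluLeftSlope (p v : ℝ) : ℝ :=
  if 0 < v then p else if v = 0 then -relu (-p) else 0

theorem zeroRamp_of_pos {p : ℝ} (hp : 0 < p) (e t : ℝ) : zeroRamp p e t = relu (p * t + e) := by
  rw [zeroRamp, abs_of_pos hp, mul_comm, ← relu_mul_of_nonneg _ hp.le]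
  congr 1
  field_simp

theorem zeroRamp_of_neg {p : ℝ} (hp : p < 0) (e t : ℝ) :
    zeroRamp p e t = relu (-(p * t + e)) := by
  rw [zeroRamp, abs_of_neg hp, mul_comm, ← relu_mul_of_nonneg _ (neg_nonneg.2 hp.le)]
  congr 1
  field_simp [hp.ne]

theorem zeroRamp_eq_zero_of_le {p e t : ℝ} (ht : t ≤ -(e / p)) : zeroRamp p e t = 0 := by
  rw [zeroRamp, relu_of_nonpos (by linarith), mul_zero]

theorem zeroRamp_of_ge {p e t : ℝ} (ht : -(e / p) ≤ t) : zeroRamp p e t = |p| * (t + e / p) := by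
  rw [zeroRamp, relu_of_nonneg (by linarith)]

theorem relu_affine (p e t : ℝ) :
    relu (p * t + e) = -relu (-p) * t
      + (if p < 0 then e else if p = 0 then relu e else 0) + zeroRamp p e t := by
  rcases lt_trichotomy p 0 with hp | rfl | hp
  · rw [zeroRamp_of_neg hp, relu_of_nonneg (neg_nonneg.2 hp.le), if_pos hp]
    linarith [relu_sub_relu_neg (p * t + e)]
  · simp [zeroRamp, relu]
  · rw [zeroRamp_of_pos hp, relu_of_nonpos (neg_nonpos.2 hp.le)]
    simp [hp.not_gt, hp.ne']

theorem lt_neg_div_iff_of_pos {p : ℝ} (hp : 0 < p) (e x : ℝ) :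
    x < -(e / p) ↔ p * x + e < 0 := by
  rw [← neg_div, lt_div_iff₀ hp, lt_neg_iff_add_neg, mul_comm]

theorem lt_neg_div_iff_of_neg {p : ℝ} (hp : p < 0) (e x : ℝ) :
    x < -(e / p) ↔ 0 < p * x + e := by
  rw [← neg_div, lt_div_iff_of_neg hp, neg_lt_iff_pos_add, mul_comm]

theorem relu_affine_of_le_right {p e x t : ℝ} (ht : x ≤ t) :
    relu (p * t + e) = relu (p * x + e) + reluRightSlope p (p * x + e) * (t - x)
      + if x < -(e / p) then zeroRamp p e t else 0 := by
  rcases lt_trichotomy p 0 with hp | rfl | hp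
  · have hpt : p * t ≤ p * x := mul_le_mul_of_nonpos_left ht hp.le
    simp only [zeroRamp_of_neg hp, lt_neg_div_iff_of_neg hp, reluRightSlope]
    rcases le_or_gt (p * x + e) 0 with hv | hv
    · have hvt : p * t + e ≤ 0 := by linarith
      simp [hv.not_gt, relu_of_nonpos hv, relu_of_nonpos hvt, relu_of_nonpos hp.le]
    · simp only [hv, if_true, relu_of_nonneg hv.le]
      linarith [relu_sub_relu_neg (p * t + e)]
  · simp [zeroRamp, reluRightSlope, relu]
  · have hpt : p * x ≤ p * t := mul_le_mul_of_nonneg_left ht hp.le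
    simp only [zeroRamp_of_pos hp, lt_neg_div_iff_of_pos hp, reluRightSlope]
    rcases lt_trichotomy (p * x + e) 0 with hv | hv | hv
    · simp [hv, hv.not_gt, hv.ne, relu_of_nonpos hv.le]
    · have hvt : p * t + e = p * (t - x) := by linarith
      simp [hv, hvt, relu_mul_of_nonneg p (sub_nonneg.2 ht), relu_of_nonneg le_rfl]
    · have hvt : 0 ≤ p * t + e := by linarith
      simp only [hv, hv.not_gt, if_true, if_false, relu_of_nonneg hv.le, relu_of_nonneg hvt]
      ring

/-- The left slope also describes the function to the right of `x`, because here a zero at `x`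
itself contributes its ramp. -/
theorem relu_affine_of_le_left {p e x t : ℝ} (ht : x ≤ t) :
    relu (p * t + e) = relu (p * x + e) + reluLeftSlope p (p * x + e) * (t - x)
      + if x ≤ -(e / p) then zeroRamp p e t else 0 := by
  rcases eq_or_ne p 0 with rfl | hp
  · simp [zeroRamp, reluLeftSlope, relu]
  by_cases hv : p * x + e = 0
  · have hroot : x = -(e / p) := by field_simp; linarith
    have hvt : p * t + e = p * (t - x) := by linarith
    have habs : |p| = relu p + relu (-p) := by
      rw [relu, relu, max_zero_add_max_neg_zero_eq_abs_self]
    rw [if_pos hroot.le, zeroRamp_of_ge (hroot ▸ ht), ← neg_eq_iff_eq_neg.2 hroot, hv, hvt,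
      relu_mul_of_nonneg p (sub_nonneg.2 ht), habs]
    simp only [reluLeftSlope, lt_irrefl, if_false, if_true, relu_of_nonneg le_rfl]
    ring
  · have hroot : x ≠ -(e / p) := by
      rintro rfl
      exact hv (by rw [mul_neg, mul_div_cancel₀ e hp, neg_add_cancel])
    have hslope : reluLeftSlope p (p * x + e) = reluRightSlope p (p * x + e) := by
      simp only [reluLeftSlope, reluRightSlope, hv, if_false]
    rw [relu_affine_of_le_right ht, hslope]
    simp only [hroot.le_iff_lt]

theorem reluRightSlope_sub_reluLeftSlope (p p' v : ℝ) :
    reluRightSlope p' v - reluLeftSlope p v =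
      if 0 < v then p' - p else if v = 0 then relu p' + relu (-p) else 0 := by
  unfold reluRightSlope reluLeftSlope
  split_ifs <;> ring

section PartialSum

open Finset

variable {M : Type*} [AddCommMonoid M] {N : ℕ}

/-- The sum of the first `k` entries of a finite family, for an arbitrary natural number `k`. -/
def partialSum (F : Fin N → M) (k : ℕ) : M := ∑ r : Fin N, if (r : ℕ) < k then F r else 0

theorem partialSum_zero (F : Fin N → M) : partialSum F 0 = 0 := by simp [partialSum]

theorem partialSum_self (F : Fin N → M) : partialSum F N = ∑ r, F r := by simp [partialSum]

theorem partialSum_succ (F : Fin N → M) (ℓ : Fin N) :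
    partialSum F (ℓ + 1) = partialSum F ℓ + F ℓ := by
  have hℓ : F ℓ = ∑ r, if r = ℓ then F r else 0 := by simp
  rw [hℓ, partialSum, partialSum, ← sum_add_distrib]
  refine sum_congr rfl fun r _ ↦ ?_
  rcases lt_trichotomy r ℓ with h | rfl | h
  · simp [h, h.ne, Nat.lt_succ_of_lt (Fin.lt_def.1 h)]
  · simp
  · simp [h.not_gt, h.ne', h]

end PartialSum

/-- A continuous piecewise linear function
`t ↦ slope * t + offset + ∑ ℓ, jump ℓ * relu (t - knot ℓ)` with strictly increasing knots, given by
its coefficients. -/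
structure CPLSpline (N : ℕ) where
  slope : ℝ
  offset : ℝ
  knot : Fin N → ℝ
  jump : Fin N → ℝ
  strictMono_knot : StrictMono knot

namespace CPLSpline

open Finset

variable {N : ℕ} (s : CPLSpline N)

/-- The function represented by the coefficients of the spline. -/
noncomputable def eval (t : ℝ) : ℝ := s.slope * t + s.offset + ∑ ℓ, s.jump ℓ * relu (t - s.knot ℓ)

/-- The spline obtained by keeping only the first `k` ramps, as a function. -/
noncomputable def truncation (k : ℕ) (t : ℝ) : ℝ :=
  s.slope * t + s.offset + partialSum (fun ℓ ↦ s.jump ℓ * relu (t - s.knot ℓ)) k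

/-- The slope of the `ν`-th affine piece (the paper's `μ_ν`), the piece `0` being unbounded to the
left. -/
noncomputable def pieceSlope (ν : ℕ) : ℝ := s.slope + partialSum s.jump ν

/-- The offset of the `ν`-th affine piece (the paper's `η_ν`). -/
noncomputable def pieceOffset (ν : ℕ) : ℝ :=
  s.offset - partialSum (fun ℓ ↦ s.jump ℓ * s.knot ℓ) ν

/-- The zero of the `ν`-th affine piece extended to the whole line, with the junk value `0` if
that piece is constant. -/
noncomputable def pieceZero (ν : ℕ) : ℝ := -(s.pieceOffset ν / s.pieceSlope ν)

/-- The `ν`-th affine piece lives on the interval from `extKnot ν` to `extKnot (ν + 1)`, so that the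
knot with index `ℓ : Fin N` is `extKnot (ℓ + 1)`. -/
noncomputable def extKnot : ℕ → EReal
  | 0 => ⊥
  | k + 1 => if h : k < N then (s.knot ⟨k, h⟩ : ℝ) else ⊤

/-- The indices of the nonconstant pieces which have a zero in the interior of their interval (the
paper's `S`). -/
noncomputable def singularPieces : Finset ℕ :=
  {ν ∈ range (N + 1) | s.pieceSlope ν ≠ 0 ∧
    s.extKnot ν < s.pieceZero ν ∧ s.pieceZero ν < s.extKnot (ν + 1)}

/-- The change of slope of `relu ∘ s.eval` at a knot (the contribution of the spline to the paper's
`β_ℓ`). -/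
noncomputable def reluJump (ℓ : Fin N) : ℝ :=
  if 0 < s.eval (s.knot ℓ) then s.jump ℓ
  else if s.eval (s.knot ℓ) = 0 then relu (s.pieceSlope (ℓ + 1)) + relu (-s.pieceSlope ℓ)
  else 0

theorem mem_singularPieces {ν : ℕ} : ν ∈ s.singularPieces ↔ ν ≤ N ∧ s.pieceSlope ν ≠ 0 ∧
    s.extKnot ν < s.pieceZero ν ∧ s.pieceZero ν < s.extKnot (ν + 1) := by
  rw [singularPieces, mem_filter, mem_range, Nat.lt_succ_iff]

theorem pieceSlope_zero : s.pieceSlope 0 = s.slope := by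
  rw [pieceSlope, partialSum_zero, add_zero]

theorem pieceOffset_zero : s.pieceOffset 0 = s.offset := by
  rw [pieceOffset, partialSum_zero, sub_zero]

theorem pieceSlope_succ (ℓ : Fin N) : s.pieceSlope (ℓ + 1) = s.pieceSlope ℓ + s.jump ℓ := by
  rw [pieceSlope, pieceSlope, partialSum_succ, add_assoc]

theorem truncation_self (t : ℝ) : s.truncation N t = s.eval t := by
  rw [truncation, partialSum_self, eval]

theorem truncation_eq_piece {k : ℕ} {t : ℝ} (ht : ∀ ℓ : Fin N, (ℓ : ℕ) < k → s.knot ℓ ≤ t) :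
    s.truncation k t = s.pieceSlope k * t + s.pieceOffset k := by
  have hsum : partialSum (fun ℓ ↦ s.jump ℓ * relu (t - s.knot ℓ)) k =
      partialSum s.jump k * t - partialSum (fun ℓ ↦ s.jump ℓ * s.knot ℓ) k := by
    rw [partialSum, partialSum, partialSum, sum_mul, ← sum_sub_distrib]
    refine sum_congr rfl fun ℓ _ ↦ ?_
    split_ifs with hℓ
    · rw [relu_of_nonneg (sub_nonneg.2 (ht ℓ hℓ)), mul_sub]
    · simp
  rw [truncation, hsum, pieceSlope, pieceOffset]
  ring

theorem truncation_eq_eval {k : ℕ} {t : ℝ} (ht : ∀ ℓ : Fin N, k ≤ ℓ → t ≤ s.knot ℓ) :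
    s.truncation k t = s.eval t := by
  rw [truncation, eval, partialSum]
  congr 1
  refine sum_congr rfl fun ℓ _ ↦ ?_
  split_ifs with hℓ
  · rfl
  · rw [relu_of_nonpos (sub_nonpos.2 (ht ℓ (not_lt.1 hℓ))), mul_zero]

theorem truncation_val_of_le_knot {ℓ : Fin N} {t : ℝ} (ht : t ≤ s.knot ℓ) :
    s.truncation ℓ t = s.eval t :=
  s.truncation_eq_eval fun _ hr ↦ ht.trans (s.strictMono_knot.monotone (Fin.le_def.2 hr))

theorem truncation_succ_of_le_knot {ℓ : Fin N} {t : ℝ} (ht : t ≤ s.knot ℓ) :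
    s.truncation (ℓ + 1) t = s.eval t :=
  s.truncation_eq_eval fun _ hr ↦
    ht.trans (s.strictMono_knot.monotone (Fin.le_def.2 ((Nat.le_succ _).trans hr)))

theorem truncation_val_of_knot_le {ℓ : Fin N} {t : ℝ} (ht : s.knot ℓ ≤ t) :
    s.truncation ℓ t = s.pieceSlope ℓ * t + s.pieceOffset ℓ :=
  s.truncation_eq_piece fun _ hr ↦ (s.strictMono_knot hr).le.trans ht

theorem truncation_succ_of_knot_le {ℓ : Fin N} {t : ℝ} (ht : s.knot ℓ ≤ t) :
    s.truncation (ℓ + 1) t = s.pieceSlope (ℓ + 1) * t + s.pieceOffset (ℓ + 1) :=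
  s.truncation_eq_piece fun _ hr ↦
    (s.strictMono_knot.monotone (Fin.le_def.2 (Nat.lt_succ_iff.1 hr))).trans ht

theorem leftPiece_knot (ℓ : Fin N) :
    s.pieceSlope ℓ * s.knot ℓ + s.pieceOffset ℓ = s.eval (s.knot ℓ) := by
  rw [← s.truncation_val_of_knot_le le_rfl, s.truncation_val_of_le_knot le_rfl]

theorem rightPiece_knot (ℓ : Fin N) :
    s.pieceSlope (ℓ + 1) * s.knot ℓ + s.pieceOffset (ℓ + 1) = s.eval (s.knot ℓ) := by
  rw [← s.truncation_succ_of_knot_le le_rfl, s.truncation_succ_of_le_knot le_rfl]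

theorem reluRightSlope_sub_reluLeftSlope_knot (ℓ : Fin N) :
    reluRightSlope (s.pieceSlope (ℓ + 1)) (s.eval (s.knot ℓ)) -
      reluLeftSlope (s.pieceSlope ℓ) (s.eval (s.knot ℓ)) = s.reluJump ℓ := by
  rw [reluRightSlope_sub_reluLeftSlope, reluJump, pieceSlope_succ, add_sub_cancel_left]

theorem extKnot_zero : s.extKnot 0 = ⊥ := rfl

theorem extKnot_succ (ℓ : Fin N) : s.extKnot (ℓ + 1) = (s.knot ℓ : ℝ) := dif_pos ℓ.isLt

theorem extKnot_last : s.extKnot (N + 1) = ⊤ := dif_neg (lt_irrefl N)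

theorem extKnot_lt_extKnot_succ {ν : ℕ} (hν : ν ≤ N) : s.extKnot ν < s.extKnot (ν + 1) := by
  cases ν with
  | zero =>
    simp only [extKnot]
    split_ifs
    · exact EReal.bot_lt_coe _
    · exact bot_lt_top
  | succ k =>
    have hk : k < N := hν
    simp only [extKnot, dif_pos hk]
    split_ifs with h
    · exact EReal.coe_lt_coe_iff.2 (s.strictMono_knot (Fin.lt_def.2 k.lt_succ_self))
    · exact EReal.coe_lt_top _

theorem eq_extKnot {X : ℕ → EReal} (hX_zero : X 0 = ⊥)
    (hX_succ : ∀ ℓ : Fin N, X (ℓ + 1) = (s.knot ℓ : ℝ)) (hX_last : X (N + 1) = ⊤) {ν : ℕ}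
    (hν : ν ≤ N + 1) : X ν = s.extKnot ν := by
  obtain - | k := ν
  · exact hX_zero
  obtain hk | rfl := (Nat.succ_le_succ_iff.1 hν).lt_or_eq
  · rw [hX_succ ⟨k, hk⟩, s.extKnot_succ ⟨k, hk⟩]
  · rw [hX_last, extKnot_last]

/-- The ramp at the zero of the `ν`-th piece. -/
noncomputable def pieceRamp (ν : ℕ) (t : ℝ) : ℝ := zeroRamp (s.pieceSlope ν) (s.pieceOffset ν) t

/-- The ramp at the zero of the `ν`-th piece, if that zero lies to the right of the left end of
the piece. -/
noncomputable def enteringRamp (ν : ℕ) (t : ℝ) : ℝ :=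
  if s.extKnot ν < s.pieceZero ν then s.pieceRamp ν t else 0

/-- The ramp at the zero of the `ν`-th piece, if that zero does not lie to the left of the right
end of the piece. -/
noncomputable def leavingRamp (ν : ℕ) (t : ℝ) : ℝ :=
  if s.extKnot (ν + 1) ≤ s.pieceZero ν then s.pieceRamp ν t else 0

theorem enteringRamp_sub_leavingRamp {ν : ℕ} (hν : ν ≤ N) (t : ℝ) :
    s.enteringRamp ν t - s.leavingRamp ν t =
      if ν ∈ s.singularPieces then s.pieceRamp ν t else 0 := by
  by_cases hslope : s.pieceSlope ν = 0
  · have hramp : s.pieceRamp ν t = 0 := by simp [pieceRamp, zeroRamp, hslope]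
    simp only [enteringRamp, leavingRamp, hramp, ite_self, sub_zero]
  have hlt := s.extKnot_lt_extKnot_succ hν
  rw [enteringRamp, leavingRamp]
  simp only [mem_singularPieces, hν, ne_eq, hslope, not_false_eq_true, true_and]
  rcases lt_or_ge (s.pieceZero ν : EReal) (s.extKnot (ν + 1)) with hzero | hzero
  · simp only [hzero, hzero.not_ge, and_true, if_false, sub_zero]
  · simp only [hlt.trans_le hzero, hzero, hzero.not_gt, and_false, if_true, if_false, sub_self]

theorem enteringRamp_succ (ℓ : Fin N) (t : ℝ) :
    s.enteringRamp (ℓ + 1) t =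
      if s.knot ℓ < s.pieceZero (ℓ + 1) then s.pieceRamp (ℓ + 1) t else 0 := by
  simp only [enteringRamp, extKnot_succ]
  exact if_congr EReal.coe_lt_coe_iff rfl rfl

theorem leavingRamp_val (ℓ : Fin N) (t : ℝ) :
    s.leavingRamp ℓ t = if s.knot ℓ ≤ s.pieceZero ℓ then s.pieceRamp ℓ t else 0 := by
  simp only [leavingRamp, extKnot_succ]
  exact if_congr EReal.coe_le_coe_iff rfl rfl

theorem relu_truncation_succ_sub (ℓ : Fin N) (t : ℝ) :
    relu (s.truncation (ℓ + 1) t) - relu (s.truncation ℓ t) =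
      s.reluJump ℓ * relu (t - s.knot ℓ) + (s.enteringRamp (ℓ + 1) t - s.leavingRamp ℓ t) := by
  rw [enteringRamp_succ, leavingRamp_val]
  rcases le_total t (s.knot ℓ) with ht | ht
  · have hramp {ν : ℕ} (hν : s.knot ℓ ≤ s.pieceZero ν) : s.pieceRamp ν t = 0 :=
      zeroRamp_eq_zero_of_le (ht.trans hν)
    rw [s.truncation_succ_of_le_knot ht, s.truncation_val_of_le_knot ht,
      relu_of_nonpos (sub_nonpos.2 ht), ite_eq_right_iff.2 fun h ↦ hramp h.le,
      ite_eq_right_iff.2 hramp]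
    ring
  · rw [s.truncation_succ_of_knot_le ht, s.truncation_val_of_knot_le ht,
      relu_affine_of_le_right ht, relu_affine_of_le_left ht, rightPiece_knot, leftPiece_knot,
      ← reluRightSlope_sub_reluLeftSlope_knot, relu_of_nonneg (sub_nonneg.2 ht)]
    unfold pieceRamp pieceZero
    ring

theorem relu_truncation_zero (t : ℝ) :
    relu (s.truncation 0 t) = -relu (-s.slope) * t
      + (if s.slope < 0 then s.offset else if s.slope = 0 then relu s.offset else 0)
      + s.enteringRamp 0 t := by
  rw [enteringRamp, extKnot_zero, if_pos (EReal.bot_lt_coe _), pieceRamp, pieceSlope_zero,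
    pieceOffset_zero, ← relu_affine, truncation, partialSum_zero, add_zero]

theorem relu_eval_eq_sum_sub (t : ℝ) :
    relu (s.eval t) = relu (s.truncation 0 t)
      + ∑ ℓ : Fin N, (relu (s.truncation (ℓ + 1) t) - relu (s.truncation ℓ t)) := by
  rw [Fin.sum_univ_eq_sum_range fun k ↦ relu (s.truncation (k + 1) t) - relu (s.truncation k t),
    sum_range_sub fun k ↦ relu (s.truncation k t), truncation_self, add_sub_cancel]

theorem leavingRamp_last (t : ℝ) : s.leavingRamp N t = 0 := by
  rw [leavingRamp, extKnot_last, if_neg (EReal.coe_lt_top _).not_ge]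

theorem sum_pieceRamp_singularPieces (t : ℝ) :
    ∑ ν ∈ s.singularPieces, s.pieceRamp ν t = s.enteringRamp 0 t
      + ∑ ℓ : Fin N, (s.enteringRamp (ℓ + 1) t - s.leavingRamp ℓ t) := by
  have hsub : s.singularPieces ⊆ range (N + 1) := filter_subset _ _
  calc ∑ ν ∈ s.singularPieces, s.pieceRamp ν t
      = ∑ ν ∈ range (N + 1), if ν ∈ s.singularPieces then s.pieceRamp ν t else 0 := by
        rw [sum_ite_mem, inter_eq_right.2 hsub]
    _ = ∑ ν ∈ range (N + 1), (s.enteringRamp ν t - s.leavingRamp ν t) :=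
        sum_congr rfl fun ν hν ↦
          (s.enteringRamp_sub_leavingRamp (mem_range_succ_iff.1 hν) t).symm
    _ = s.enteringRamp 0 t + ∑ k ∈ range N, (s.enteringRamp (k + 1) t - s.leavingRamp k t) := by
        rw [sum_sub_distrib, sum_range_succ', sum_range_succ, leavingRamp_last, sum_sub_distrib]
        ring
    _ = s.enteringRamp 0 t + ∑ ℓ : Fin N, (s.enteringRamp (ℓ + 1) t - s.leavingRamp ℓ t) := by
        rw [Fin.sum_univ_eq_sum_range fun k ↦ s.enteringRamp (k + 1) t - s.leavingRamp k t]

theorem relu_eval (t : ℝ) :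
    relu (s.eval t) = -relu (-s.slope) * t
      + (if s.slope < 0 then s.offset else if s.slope = 0 then relu s.offset else 0)
      + ∑ ℓ, s.reluJump ℓ * relu (t - s.knot ℓ)
      + ∑ ν ∈ s.singularPieces, s.pieceRamp ν t := by
  rw [relu_eval_eq_sum_sub, relu_truncation_zero, sum_pieceRamp_singularPieces]
  simp only [relu_truncation_succ_sub, sum_add_distrib]
  ring

theorem sum_mul_relu_eval {ι : Type*} [Fintype ι] (s : ι → CPLSpline N) {ξ : Fin N → ℝ}
    (hξ : ∀ i, (s i).knot = ξ) (a : ι → ℝ) (t : ℝ) :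
    ∑ i, a i * relu ((s i).eval t) = -(∑ i, a i * relu (-(s i).slope)) * t
      + ∑ i, a i * (if (s i).slope < 0 then (s i).offset
          else if (s i).slope = 0 then relu (s i).offset else 0)
      + ∑ ℓ, (∑ i, a i * (s i).reluJump ℓ) * relu (t - ξ ℓ)
      + ∑ i, ∑ ν ∈ (s i).singularPieces, a i * (s i).pieceRamp ν t := by
  have hkinks : ∑ i, a i * ∑ ℓ, (s i).reluJump ℓ * relu (t - ξ ℓ) =
      ∑ ℓ, (∑ i, a i * (s i).reluJump ℓ) * relu (t - ξ ℓ) := by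
    simp only [mul_sum, sum_mul, mul_assoc]
    exact sum_comm
  have hslopes : ∑ i, a i * (-relu (-(s i).slope) * t) =
      -(∑ i, a i * relu (-(s i).slope)) * t := by
    rw [← sum_neg_distrib, sum_mul]
    exact sum_congr rfl fun i _ ↦ by ring
  simp only [relu_eval, hξ, mul_add, sum_add_distrib]
  rw [hslopes, hkinks]
  simp only [mul_sum]

end CPLSpline

/-- one recursion step (Corollary 4.2 of the paper): if
`f(t) = c·t + b + Σ_j a_j σ(g_j(t))` where each `g_j` is a CPL spline with common knots
`ξ₁ < … < ξ_N`, then `f` is a CPL spline whose knots are the `ξ_ℓ` together with the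
singular zeros of the `g_j`.  The Lean index `ℓ : Fin N` corresponds to the paper's knot
`ξ_{ℓ+1}`; `μ j ν`, `η j ν` (for `ν = 0,…,N`) are the slope and offset of `g_j` on
`(ξ_ν, ξ_{ν+1})`; `X : ℕ → EReal` extends the knots by `X 0 = −∞`, `X (N+1) = +∞`; and
`S j` is the set of indices `ν` with `μ_{j,ν} ≠ 0` and `−η_{j,ν}/μ_{j,ν} ∈ (ξ_ν, ξ_{ν+1})`. -/
theorem recursion_step (N m : ℕ)
    (ξ : Fin N → ℝ) (hξ : StrictMono ξ)
    (q1j q0j : Fin m → ℝ) (α : Fin m → Fin N → ℝ)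
    (g : Fin m → ℝ → ℝ)
    (hg : ∀ j t, g j t = q1j j * t + q0j j + ∑ ℓ, α j ℓ * relu (t - ξ ℓ))
    (a : Fin m → ℝ) (c b : ℝ)
    (f : ℝ → ℝ)
    (hf : ∀ t, f t = c * t + b + ∑ j, a j * relu (g j t))
    (μ η : Fin m → ℕ → ℝ)
    (hμ : ∀ j ν, μ j ν = q1j j + ∑ r : Fin N, if (r : ℕ) < ν then α j r else 0)
    (hη : ∀ j ν, η j ν = q0j j - ∑ r : Fin N, if (r : ℕ) < ν then α j r * ξ r else 0)
    (X : ℕ → EReal)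
    (hX0 : X 0 = ⊥)
    (hXmid : ∀ ℓ : Fin N, X ((ℓ : ℕ) + 1) = (ξ ℓ : ℝ))
    (hXtop : X (N + 1) = ⊤)
    (S : Fin m → Finset ℕ)
    (hS : ∀ j ν, ν ∈ S j ↔ ν ≤ N ∧ μ j ν ≠ 0 ∧
      X ν < ((-(η j ν / μ j ν) : ℝ) : EReal) ∧
      ((-(η j ν / μ j ν) : ℝ) : EReal) < X (ν + 1)) :
    ∀ t, f t =
      (c - ∑ j, a j * relu (-(q1j j))) * t
      + (b + ∑ j, a j *
          (if q1j j < 0 then q0j j else if q1j j = 0 then relu (q0j j) else 0))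
      + (∑ ℓ : Fin N,
          (∑ j, a j * (if 0 < g j (ξ ℓ) then α j ℓ
            else if g j (ξ ℓ) = 0 then relu (μ j ((ℓ : ℕ) + 1)) + relu (-(μ j (ℓ : ℕ)))
            else 0)) * relu (t - ξ ℓ))
      + ∑ j, ∑ ν ∈ S j, a j * |μ j ν| * relu (t + η j ν / μ j ν) := by
  intro t
  let s (j : Fin m) : CPLSpline N := ⟨q1j j, q0j j, ξ, α j, hξ⟩
  have hg_eval j u : g j u = (s j).eval u := hg j u
  have hμ_slope j ν : μ j ν = (s j).pieceSlope ν := hμ j ν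
  have hη_offset j ν : η j ν = (s j).pieceOffset ν := hη j ν
  have hS_singular j : S j = (s j).singularPieces := by
    ext ν
    rw [hS, hμ_slope, hη_offset, CPLSpline.mem_singularPieces]
    refine and_congr_right fun hν ↦ ?_
    rw [(s j).eq_extKnot hX0 hXmid hXtop (hν.trans N.le_succ),
      (s j).eq_extKnot hX0 hXmid hXtop (Nat.succ_le_succ hν), CPLSpline.pieceZero]
  simp only [hf, hg_eval, hμ_slope, hη_offset, hS_singular, mul_assoc]
  rw [CPLSpline.sum_mul_relu_eval s (fun _ ↦ rfl) a t]
  simp only [CPLSpline.reluJump, CPLSpline.pieceRamp, zeroRamp, s]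
  ring
end

section
/- Let n₁ ≥ 1, n₂ ≥ 2 and n₃ ≥ log₂(n₁ + (n₁+1)·n₂), and set N = n₂·n₃ + n₁·n₂ + n₁ + n₂ + n₃. Then for any N pairwise distinct real numbers y₁ < y₂ < … < y_N there exists a function f₄ ∈ Y_{n₁,n₂,n₃} (a three-hidden-layer ReLU network) that possesses all of y₁, …, y_N as breakpoints; in particular, f₄ is not differentiable at each of the points y₁, …, y_N. -/
/-- `f` belongs to the three-hidden-layer ReLU network class `Y_{n₁,n₂,n₃}`. -/
def IsReLU3 (n1 n2 n3 : ℕ) (f : ℝ → ℝ) : Prop :=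
  ∃ (a1 b1 : Fin n1 → ℝ) (a2 : Fin n2 → Fin n1 → ℝ) (c2 b2 : Fin n2 → ℝ)
    (a3 : Fin n3 → Fin n2 → ℝ) (c3 b3 : Fin n3 → ℝ) (a4 : Fin n3 → ℝ) (c4 b4 : ℝ),
    ∀ t, f t = c4 * t + b4 +
      ∑ r, a4 r * relu
        ((∑ j, a3 r j * relu ((∑ k, a2 j k * relu (a1 k * t + b1 k)) + c2 j * t + b2 j))
          + c3 r * t + b3 r)

open scoped Topology

/-! A zigzag function on the line is a sum of ramps `σ(t - x_k)`, so it is computed by one hidden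
layer with one unit per kink `x_k`, and its zeros `z_k` may be any points interlacing the kinks.
Take `n₂` zigzags with common kinks `x₀ < ⋯ < x_{n₁-1}` and alternating orientation; a correction by
an affine function makes the positive part of the `j`-th one equal to the ramp `σ(t - z_{j,0})` to
the left of `x₀`. Outer zigzags built from these functions instead of from ramps look, left of `x₀`,
like ordinary zigzags with kinks `z_{0,0} < z_{1,0} < ⋯`. All `n₃` of them share these kinks and
have their own zeros there, while to the right they bend at every `z_{j,k}` and every `x_k`.

The outermost ReLU keeps the zeros as breakpoints and could destroy a common breakpoint `p` only if
it clips every outer zigzag near `p`. Flipping the signs of the outer zigzags is allowed, and each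
common breakpoint is destroyed by at most one of the `2 ^ n₃` sign patterns; the `n₂ + 1` common
breakpoints up to `x₀`, where all outer zigzags have the same sign, account for only two patterns.
So some pattern keeps every breakpoint, and weights outside finitely many hyperplanes prevent
cancellation in the final sum. -/

/-! ### The ReLU function -/

section ReLU

variable {f g : ℝ → ℝ} {p : ℝ}

theorem relu_of_nonneg_s17 {u : ℝ} (hu : 0 ≤ u) : relu u = u := max_eq_left hu

theorem relu_of_nonpos_s17 {u : ℝ} (hu : u ≤ 0) : relu u = 0 := max_eq_right hu

theorem relu_neg (u : ℝ) : relu (-u) = relu u - u := by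
  rcases le_total 0 u with hu | hu
  · rw [relu_of_nonneg_s17 hu, relu_of_nonpos_s17 (neg_nonpos.2 hu), sub_self]
  · rw [relu_of_nonpos_s17 hu, relu_of_nonneg_s17 (neg_nonneg.2 hu), zero_sub]

theorem relu_neg_one_pow_mul (j : ℕ) (u : ℝ) :
    relu ((-1) ^ j * u) = relu u - (1 - (-1) ^ j) / 2 * u := by
  rcases neg_one_pow_eq_or ℝ j with h | h
  · simp [h]
  · rw [h, neg_one_mul, relu_neg]
    ring

theorem relu_mul (s u : ℝ) : relu (s * u) = |s| * relu u + min s 0 * u := by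
  rcases le_total 0 s with hs | hs <;> rcases le_total 0 u with hu | hu
  · rw [relu_of_nonneg_s17 (mul_nonneg hs hu), relu_of_nonneg_s17 hu, abs_of_nonneg hs, min_eq_right hs]
    ring
  · rw [relu_of_nonpos_s17 (mul_nonpos_of_nonneg_of_nonpos hs hu), relu_of_nonpos_s17 hu, min_eq_right hs]
    ring
  · rw [relu_of_nonpos_s17 (mul_nonpos_of_nonpos_of_nonneg hs hu), relu_of_nonneg_s17 hu,
      abs_of_nonpos hs, min_eq_left hs]
    ring
  · rw [relu_of_nonneg_s17 (mul_nonneg_of_nonpos_of_nonpos hs hu), relu_of_nonpos_s17 hu, min_eq_left hs]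
    ring

@[fun_prop]
theorem continuous_relu : Continuous relu := continuous_id.max continuous_const

theorem relu_comp_eventuallyEq_self (hg : ContinuousAt g p) (hp : 0 < g p) :
    (fun t => relu (g t)) =ᶠ[𝓝 p] g := by
  filter_upwards [hg.eventually (lt_mem_nhds hp)] with t ht using relu_of_nonneg_s17 (le_of_lt ht)

theorem relu_comp_eventuallyEq_zero (hg : ContinuousAt g p) (hp : g p < 0) :
    (fun t => relu (g t)) =ᶠ[𝓝 p] fun _ => 0 := by
  filter_upwards [hg.eventually (gt_mem_nhds hp)] with t ht using relu_of_nonpos_s17 (le_of_lt ht)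

theorem differentiableAt_relu_comp_of_neg (hg : ContinuousAt g p) (hp : g p < 0) :
    DifferentiableAt ℝ (fun t => relu (g t)) p :=
  (differentiableAt_const 0).congr_of_eventuallyEq (relu_comp_eventuallyEq_zero hg hp)

theorem differentiableAt_relu_comp (hg : DifferentiableAt ℝ g p) (hp : g p ≠ 0) :
    DifferentiableAt ℝ (fun t => relu (g t)) p := by
  rcases lt_or_gt_of_ne hp with hp | hp
  · exact differentiableAt_relu_comp_of_neg hg.continuousAt hp
  · exact hg.congr_of_eventuallyEq (relu_comp_eventuallyEq_self hg.continuousAt hp)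

theorem not_differentiableAt_relu_sub (p : ℝ) :
    ¬ DifferentiableAt ℝ (fun t => relu (t - p)) p := by
  intro h
  have hrelu : DifferentiableAt ℝ relu 0 := by
    simpa using differentiableAt_comp_sub_const.1 h
  have habs (u : ℝ) : |u| = 2 * relu u - u := by
    rcases le_total 0 u with hu | hu
    · rw [abs_of_nonneg hu, relu_of_nonneg_s17 hu]
      ring
    · rw [abs_of_nonpos hu, relu_of_nonpos_s17 hu]
      ring
  exact not_differentiableAt_abs_zero
    (((hrelu.const_mul 2).fun_sub differentiableAt_fun_id).congr_of_eventuallyEq (.of_forall habs))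

theorem units_eq_of_differentiableAt_relu {u v : ℤˣ} (hf : ¬ DifferentiableAt ℝ f p)
    (hu : DifferentiableAt ℝ (fun t => relu ((u : ℤ) * f t)) p)
    (hv : DifferentiableAt ℝ (fun t => relu ((v : ℤ) * f t)) p) : u = v := by
  have not_both (h : DifferentiableAt ℝ (fun t => relu (f t)) p)
      (h' : DifferentiableAt ℝ (fun t => relu (-f t)) p) : False := by
    simp only [relu_neg] at h'
    exact hf (by simpa using h.fun_sub h')
  rcases Int.units_eq_one_or u with rfl | rfl <;> rcases Int.units_eq_one_or v with rfl | rfl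
  · rfl
  · exact (not_both (by simpa using hu) (by simpa using hv)).elim
  · exact (not_both (by simpa using hv) (by simpa using hu)).elim
  · rfl

end ReLU

/-! ### Slope jumps -/

/-- `f` has one-sided slopes at `p` that differ by `c`, encoded as: subtracting `c` times the ramp
`σ(t - p)` makes `f` differentiable at `p`. -/
def HasSlopeJump (f : ℝ → ℝ) (c p : ℝ) : Prop :=
  DifferentiableAt ℝ (fun t => f t - c * relu (t - p)) p

section HasSlopeJump

variable {f g : ℝ → ℝ} {c d p : ℝ}

theorem hasSlopeJump_zero_iff : HasSlopeJump f 0 p ↔ DifferentiableAt ℝ f p := by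
  simp [HasSlopeJump]

theorem HasSlopeJump.congr_of_eventuallyEq (hf : HasSlopeJump f c p) (h : g =ᶠ[𝓝 p] f) :
    HasSlopeJump g c p :=
  DifferentiableAt.congr_of_eventuallyEq hf (h.sub .rfl)

theorem HasSlopeJump.not_differentiableAt (hf : HasSlopeJump f c p) (hc : c ≠ 0) :
    ¬ DifferentiableAt ℝ f p := fun h =>
  not_differentiableAt_relu_sub p <| by
    simpa [hc] using (h.sub hf).const_mul c⁻¹

theorem HasSlopeJump.add (hf : HasSlopeJump f c p) (hg : HasSlopeJump g d p) :
    HasSlopeJump (fun t => f t + g t) (c + d) p := by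
  refine (DifferentiableAt.fun_add hf hg).congr_of_eventuallyEq (.of_forall fun t => ?_)
  ring

theorem HasSlopeJump.const_mul (hf : HasSlopeJump f c p) (a : ℝ) :
    HasSlopeJump (fun t => a * f t) (a * c) p := by
  refine (DifferentiableAt.const_mul hf a).congr_of_eventuallyEq (.of_forall fun t => ?_)
  ring

theorem HasSlopeJump.sum {ι : Type*} {s : Finset ι} {f : ι → ℝ → ℝ} {c : ι → ℝ}
    (h : ∀ i ∈ s, HasSlopeJump (f i) (c i) p) :
    HasSlopeJump (fun t => ∑ i ∈ s, f i t) (∑ i ∈ s, c i) p := by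
  simpa only [HasSlopeJump, Finset.sum_mul, ← Finset.sum_sub_distrib]
    using DifferentiableAt.fun_sum h

theorem hasSlopeJump_relu_sub (a p : ℝ) :
    HasSlopeJump (fun t => relu (t - a)) (if a = p then 1 else 0) p := by
  split_ifs with h
  · simp [HasSlopeJump, h]
  · exact hasSlopeJump_zero_iff.2
      (differentiableAt_relu_comp (by fun_prop) (sub_ne_zero.2 (Ne.symm h)))

theorem hasSlopeJump_relu_mul_sub (s a p : ℝ) :
    HasSlopeJump (fun t => relu (s * (t - a))) (if a = p then |s| else 0) p := by
  have hlin : HasSlopeJump (fun t => min s 0 * (t - a)) 0 p :=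
    hasSlopeJump_zero_iff.2 (by fun_prop)
  simpa [relu_mul, mul_ite] using ((hasSlopeJump_relu_sub a p).const_mul |s|).add hlin

theorem HasSlopeJump.relu_comp (hf : HasSlopeJump f c p) (hcont : ContinuousAt f p)
    (hp : f p ≠ 0) : HasSlopeJump (fun t => relu (f t)) (if 0 < f p then c else 0) p := by
  split_ifs with h
  · exact hf.congr_of_eventuallyEq (relu_comp_eventuallyEq_self hcont h)
  · exact hasSlopeJump_zero_iff.2
      (differentiableAt_relu_comp_of_neg hcont (lt_of_le_of_ne (not_lt.1 h) hp))

end HasSlopeJump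

/-! ### Zigzag functions -/

/-- The sequences `z` (zeros) and `x` (kinks) interlace: `z 0 < x 0 < z 1 < x 1 < ⋯`. -/
def Interlacing (z x : ℕ → ℝ) : Prop :=
  ∀ k, z k < x k ∧ x k < z (k + 1)

/-- The slope of a zigzag function through its `k`-th zero `z k`. The product is what continuity
at the kinks `x i` forces, starting from slope `1`. -/
noncomputable def zigzagSlope (z x : ℕ → ℝ) (k : ℕ) : ℝ :=
  (-1) ^ k * ∏ i ∈ Finset.range k, (x i - z i) / (z (i + 1) - x i)

/-- The change of slope of a zigzag function at its `k`-th kink `x k`. -/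
noncomputable def zigzagJump (z x : ℕ → ℝ) (k : ℕ) : ℝ :=
  zigzagSlope z x (k + 1) - zigzagSlope z x k

/-- The piecewise linear function with kinks `x 0, …, x (m - 1)`, zeros `z 0, …, z m` and initial
slope `1`, written as a sum of ramps so that it is visibly computed by one hidden layer. -/
noncomputable def zigzag (z x : ℕ → ℝ) (m : ℕ) (t : ℝ) : ℝ :=
  t - z 0 + ∑ k ∈ Finset.range m, zigzagJump z x k * relu (t - x k)

section Zigzag

variable {z x : ℕ → ℝ} {k m : ℕ} {p t : ℝ}

@[fun_prop]
theorem continuous_zigzag (z x : ℕ → ℝ) (m : ℕ) : Continuous (zigzag z x m) := by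
  unfold zigzag
  fun_prop

theorem hasSlopeJump_zigzag (hx : Function.Injective x) (hk : k < m) :
    HasSlopeJump (zigzag z x m) (zigzagJump z x k) (x k) := by
  have hlin : HasSlopeJump (fun t => t - z 0) 0 (x k) := hasSlopeJump_zero_iff.2 (by fun_prop)
  have hsum : HasSlopeJump (fun t => ∑ i ∈ Finset.range m, zigzagJump z x i * relu (t - x i))
      (∑ i ∈ Finset.range m, zigzagJump z x i * if x i = x k then 1 else 0) (x k) :=
    .sum fun i _ => (hasSlopeJump_relu_sub _ _).const_mul _
  simpa [hx.eq_iff, hk] using! hlin.add hsum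

namespace Interlacing

theorem strictMono_kinks (h : Interlacing z x) : StrictMono x :=
  strictMono_nat_of_lt_succ fun k => (h k).2.trans (h (k + 1)).1

theorem kink_lt_zero (h : Interlacing z x) {i : ℕ} (hik : i < k) : x i < z k := by
  obtain ⟨k, rfl⟩ := Nat.exists_eq_succ_of_ne_zero (Nat.ne_zero_of_lt hik)
  exact (h.strictMono_kinks.monotone (Nat.le_of_lt_succ hik)).trans_lt (h k).2

theorem neg_one_pow_mul_zigzagSlope_pos (h : Interlacing z x) (k : ℕ) :
    0 < (-1) ^ k * zigzagSlope z x k := by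
  rw [zigzagSlope, ← mul_assoc, ← mul_pow, neg_mul_neg, one_mul, one_pow, one_mul]
  exact Finset.prod_pos fun i _ => div_pos (sub_pos.2 (h i).1) (sub_pos.2 (h i).2)

theorem zigzagSlope_ne_zero (h : Interlacing z x) (k : ℕ) : zigzagSlope z x k ≠ 0 :=
  right_ne_zero_of_mul (h.neg_one_pow_mul_zigzagSlope_pos k).ne'

theorem neg_one_pow_mul_zigzagJump_pos (h : Interlacing z x) (k : ℕ) :
    0 < (-1) ^ (k + 1) * zigzagJump z x k := by
  have hk := h.neg_one_pow_mul_zigzagSlope_pos k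
  have hk' := h.neg_one_pow_mul_zigzagSlope_pos (k + 1)
  calc 0 < (-1) ^ (k + 1) * zigzagSlope z x (k + 1) + (-1) ^ k * zigzagSlope z x k :=
        add_pos hk' hk
    _ = (-1) ^ (k + 1) * zigzagJump z x k := by
        rw [zigzagJump]
        ring

theorem zigzagSlope_succ_mul_sub (h : Interlacing z x) (k : ℕ) :
    zigzagSlope z x (k + 1) * (x k - z (k + 1)) = zigzagSlope z x k * (x k - z k) := by
  have hne : z (k + 1) - x k ≠ 0 := (sub_pos.2 (h k).2).ne'
  rw [zigzagSlope, zigzagSlope, Finset.prod_range_succ]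
  field_simp
  ring

theorem zigzag_eq_of_kinks_le (h : Interlacing z x) (ht : ∀ i < m, x i ≤ t) :
    zigzag z x m t = zigzagSlope z x m * (t - z m) := by
  induction m with
  | zero => simp [zigzag, zigzagSlope]
  | succ m ih =>
    have hsucc : zigzag z x (m + 1) t = zigzag z x m t + zigzagJump z x m * relu (t - x m) := by
      simp only [zigzag, Finset.sum_range_succ]
      ring
    rw [hsucc, ih fun i hi => ht i (hi.trans m.lt_succ_self),
      relu_of_nonneg_s17 (sub_nonneg.2 (ht m m.lt_succ_self)), zigzagJump]
    linear_combination -h.zigzagSlope_succ_mul_sub m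

theorem zigzag_eq (h : Interlacing z x) (hk : k ≤ m) (hlo : ∀ i < k, x i ≤ t) (hhi : t ≤ x k) :
    zigzag z x m t = zigzagSlope z x k * (t - z k) := by
  rw [← h.zigzag_eq_of_kinks_le hlo, zigzag, zigzag]
  congr 1
  refine (Finset.sum_subset (Finset.range_subset_range.2 hk) fun i _ hi => ?_).symm
  have hki : x k ≤ x i := h.strictMono_kinks.monotone (by simpa using hi)
  rw [relu_of_nonpos_s17 (sub_nonpos.2 (hhi.trans hki)), mul_zero]

theorem zigzag_eventuallyEq (h : Interlacing z x) (hk : k ≤ m) (hlo : ∀ i < k, x i < p)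
    (hhi : p < x k) : zigzag z x m =ᶠ[𝓝 p] fun t => zigzagSlope z x k * (t - z k) := by
  have hlo' : ∀ᶠ t in 𝓝 p, ∀ i ∈ Finset.range k, x i < t :=
    (Filter.eventually_all_finset _).2 fun i hi => lt_mem_nhds (hlo i (Finset.mem_range.1 hi))
  filter_upwards [hlo', gt_mem_nhds hhi] with t hlo hhi
  exact h.zigzag_eq hk (fun i hi => (hlo i (Finset.mem_range.2 hi)).le) (le_of_lt hhi)

theorem neg_one_pow_mul_zigzag_kink_pos (h : Interlacing z x) (hk : k ≤ m) :
    0 < (-1) ^ k * zigzag z x m (x k) := by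
  rw [h.zigzag_eq hk (fun i hi => (h.strictMono_kinks hi).le) le_rfl, ← mul_assoc]
  exact mul_pos (h.neg_one_pow_mul_zigzagSlope_pos k) (sub_pos.2 (h k).1)

end Interlacing

end Zigzag

/-! ### Nested zigzag functions -/

/-- Column `j` of the array obtained by writing the sequence `v` in rows of length `n + 1`. -/
def column (n : ℕ) (v : ℕ → ℝ) (j k : ℕ) : ℝ := v (k * (n + 1) + j)

theorem mul_succ_add_lt_mul_succ_add {n i j k : ℕ} (hik : i < k) :
    i * (n + 1) + n < k * (n + 1) + j := by
  nlinarith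

theorem interlacing_column {n j : ℕ} {v : ℕ → ℝ} (hv : StrictMono v) (hj : j < n) :
    Interlacing (column n v j) (column n v n) := fun k =>
  ⟨hv (by lia), hv (mul_succ_add_lt_mul_succ_add k.lt_succ_self)⟩

/-- A zigzag with zeros `w` and kinks `Z 0, …, Z (n - 1)` in which the ramp `σ(t - Z j)` is replaced
by the positive part of an inner zigzag (of sign `(-1) ^ j`) plus an affine correction. The inner
zigzags have the zeros `column n V j`, for `j < n`, and the `m` common kinks `column n V n`. When
`V j = Z j` for `j < n`, the replaced ramps are unchanged to the left of the first inner kink. -/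
noncomputable def nestedZigzag (m n : ℕ) (w Z V : ℕ → ℝ) (t : ℝ) : ℝ :=
  t - w 0 + ∑ j ∈ Finset.range n, zigzagJump w Z j *
    (relu ((-1) ^ j * zigzag (column n V j) (column n V n) m t)
      + (1 - (-1) ^ j) / 2 * (t - Z j))

section NestedZigzag

variable {m n i j k : ℕ} {w Z V : ℕ → ℝ} {p t : ℝ}

@[fun_prop]
theorem continuous_nestedZigzag (m n : ℕ) (w Z V : ℕ → ℝ) :
    Continuous (nestedZigzag m n w Z V) := by
  unfold nestedZigzag
  fun_prop

theorem HasSlopeJump.nestedZigzag {c : ℕ → ℝ}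
    (hc : ∀ j < n, HasSlopeJump
      (fun t => relu ((-1) ^ j * zigzag (column n V j) (column n V n) m t)) (c j) p) :
    HasSlopeJump (nestedZigzag m n w Z V) (∑ j ∈ Finset.range n, zigzagJump w Z j * c j) p := by
  have hlin : HasSlopeJump (fun t => t - w 0) 0 p := hasSlopeJump_zero_iff.2 (by fun_prop)
  have hcorr (j : ℕ) : HasSlopeJump (fun t => (1 - (-1) ^ j) / 2 * (t - Z j)) 0 p :=
    hasSlopeJump_zero_iff.2 (by fun_prop)
  have hsum := HasSlopeJump.sum fun j hj =>
    ((hc j (Finset.mem_range.1 hj)).add (hcorr j)).const_mul (zigzagJump w Z j)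
  simpa using! hlin.add hsum

theorem nestedZigzag_eq_zigzag (hV : StrictMono V) (hZ : ∀ j ≤ n, Z j = V j) (ht : t ≤ Z n) :
    nestedZigzag m n w Z V t = zigzag w Z n t := by
  unfold nestedZigzag
  rw [zigzag]
  congr 1
  refine Finset.sum_congr rfl fun j hj => ?_
  have hj : j < n := Finset.mem_range.1 hj
  have hfirst : t ≤ column n V n 0 := by simpa [column, ← hZ n le_rfl] using ht
  have hinner : zigzag (column n V j) (column n V n) m t = t - Z j := by
    rw [(interlacing_column hV hj).zigzag_eq m.zero_le (by simp) hfirst]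
    simp [zigzagSlope, column, hZ j hj.le]
  rw [hinner, relu_neg_one_pow_mul, sub_add_cancel]

theorem not_differentiableAt_relu_nestedZigzag_zero (hw : Interlacing w Z) (hV : StrictMono V)
    (hZ : ∀ j ≤ n, Z j = V j) (hi : i ≤ n) {s : ℝ} (hs : s ≠ 0) :
    ¬ DifferentiableAt ℝ (fun t => relu (s * nestedZigzag m n w Z V t)) (w i) := by
  have hjump := hasSlopeJump_relu_mul_sub (s * zigzagSlope w Z i) (w i) (w i)
  rw [if_pos rfl] at hjump
  have hloc : (fun t => relu (s * nestedZigzag m n w Z V t)) =ᶠ[𝓝 (w i)]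
      fun t => relu (s * zigzagSlope w Z i * (t - w i)) := by
    filter_upwards [hw.zigzag_eventuallyEq hi (fun _ => hw.kink_lt_zero) (hw i).1,
      gt_mem_nhds ((hw i).1.trans_le (hw.strictMono_kinks.monotone hi))] with t hzig ht
    rw [nestedZigzag_eq_zigzag hV hZ (le_of_lt ht), hzig, mul_assoc]
  exact (hjump.congr_of_eventuallyEq hloc).not_differentiableAt
    (abs_ne_zero.2 (mul_ne_zero hs (hw.zigzagSlope_ne_zero i)))

theorem neg_one_pow_mul_nestedZigzag_pos (hw : Interlacing w Z) (hV : StrictMono V)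
    (hZ : ∀ j ≤ n, Z j = V j) (hi : i ≤ n) : 0 < (-1) ^ i * nestedZigzag m n w Z V (Z i) := by
  rw [nestedZigzag_eq_zigzag hV hZ (hw.strictMono_kinks.monotone hi)]
  exact hw.neg_one_pow_mul_zigzag_kink_pos hi

theorem hasSlopeJump_relu_zigzag_column (hV : StrictMono V) (hi : i < n) (hj : j < n)
    (hk : k ≤ m) :
    HasSlopeJump (fun t => relu ((-1) ^ i * zigzag (column n V i) (column n V n) m t))
      (if i = j then |zigzagSlope (column n V j) (column n V n) k| else 0) (column n V j k) := by
  have hjump := hasSlopeJump_relu_mul_sub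
    ((-1) ^ i * zigzagSlope (column n V i) (column n V n) k) (column n V i k) (column n V j k)
  have hloc := (interlacing_column hV hi).zigzag_eventuallyEq hk
    (fun _ => (interlacing_column hV hj).kink_lt_zero) (interlacing_column hV hj k).1
  have hiff : column n V i k = column n V j k ↔ i = j := by simp [column, hV.injective.eq_iff]
  simp only [hiff, abs_mul, abs_pow, abs_neg, abs_one, one_pow, one_mul] at hjump
  convert! hjump.congr_of_eventuallyEq ?_ using 1
  · split_ifs with hij
    · rw [hij]
    · rfl
  · filter_upwards [hloc] with t ht
    rw [ht, mul_assoc]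

theorem not_differentiableAt_nestedZigzag_innerZero (hw : Interlacing w Z) (hV : StrictMono V)
    (hj : j < n) (hk : k ≤ m) :
    ¬ DifferentiableAt ℝ (nestedZigzag m n w Z V) (column n V j k) := by
  have hjump : HasSlopeJump (nestedZigzag m n w Z V)
      (zigzagJump w Z j * |zigzagSlope (column n V j) (column n V n) k|) (column n V j k) := by
    simpa [hj] using HasSlopeJump.nestedZigzag (w := w) (Z := Z)
      fun i hi => hasSlopeJump_relu_zigzag_column hV hi hj hk
  exact hjump.not_differentiableAt (mul_ne_zero
    (right_ne_zero_of_mul (hw.neg_one_pow_mul_zigzagJump_pos j).ne')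
    (abs_ne_zero.2 ((interlacing_column hV hj).zigzagSlope_ne_zero k)))

theorem hasSlopeJump_relu_zigzag_kink {z x : ℕ → ℝ} (h : Interlacing z x) (hk : k < m) :
    HasSlopeJump (fun t => relu ((-1) ^ j * zigzag z x m t))
      (if Even (j + k) then (-1) ^ k * zigzagJump z x k else 0) (x k) := by
  have hpos := h.neg_one_pow_mul_zigzag_kink_pos hk.le
  have hjump := (hasSlopeJump_zigzag (z := z) h.strictMono_kinks.injective hk).const_mul ((-1) ^ j)
  have hcont : ContinuousAt (fun t => (-1) ^ j * zigzag z x m t) (x k) := by fun_prop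
  by_cases hjk : Even (j + k)
  · have hsign : (-1 : ℝ) ^ j = (-1) ^ k := neg_one_pow_congr (Nat.even_add.1 hjk)
    rw [hsign] at hjump hcont ⊢
    simpa [hjk, hpos] using hjump.relu_comp hcont hpos.ne'
  · have hsign : (-1 : ℝ) ^ j = -(-1) ^ k := by
      rw [neg_one_pow_congr (show Even j ↔ Even (k + 1) by grind), pow_succ, mul_neg_one]
    rw [hsign] at hjump hcont ⊢
    rw [if_neg hjk]
    exact hasSlopeJump_zero_iff.2 (differentiableAt_relu_comp_of_neg hcont (by linarith))

theorem not_differentiableAt_nestedZigzag_innerKink (hw : Interlacing w Z) (hV : StrictMono V)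
    (hn : 2 ≤ n) (hk : k < m) :
    ¬ DifferentiableAt ℝ (nestedZigzag m n w Z V) (column n V n k) := by
  have hjump := HasSlopeJump.nestedZigzag (w := w) (Z := Z) fun j (hj : j < n) =>
    hasSlopeJump_relu_zigzag_kink (j := j) (interlacing_column hV hj) hk
  have hterm : ∀ j < n, Even (j + k) →
      0 < zigzagJump w Z j * zigzagJump (column n V j) (column n V n) k := by
    intro j hj hjk
    have := mul_pos (hw.neg_one_pow_mul_zigzagJump_pos j)
      ((interlacing_column hV hj).neg_one_pow_mul_zigzagJump_pos k)
    rwa [mul_mul_mul_comm, ← pow_add, show j + 1 + (k + 1) = j + k + 2 by ring, pow_add,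
      hjk.neg_one_pow, neg_one_sq, one_mul, one_mul] at this
  have hsum : 0 < ∑ j ∈ Finset.range n, if Even (j + k) then
      zigzagJump w Z j * zigzagJump (column n V j) (column n V n) k else 0 := by
    refine Finset.sum_pos' (fun j hj => ?_) ⟨k % 2, Finset.mem_range.2 (by lia), ?_⟩
    · split_ifs with hjk
      · exact (hterm j (Finset.mem_range.1 hj) hjk).le
      · exact le_rfl
    · have hpar : Even (k % 2 + k) := by grind
      rw [if_pos hpar]
      exact hterm _ (by lia) hpar
  refine hjump.not_differentiableAt ?_
  convert! mul_ne_zero (pow_ne_zero k (neg_ne_zero.2 (one_ne_zero (α := ℝ)))) hsum.ne' using 1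
  rw [Finset.mul_sum]
  refine Finset.sum_congr rfl fun j _ => ?_
  split_ifs
  · ring
  · ring

theorem not_differentiableAt_nestedZigzag (hw : Interlacing w Z) (hV : StrictMono V) (hn : 2 ≤ n)
    (hi : i < m * (n + 1) + n) : ¬ DifferentiableAt ℝ (nestedZigzag m n w Z V) (V i) := by
  obtain ⟨k, j, hj, rfl⟩ : ∃ k j, j ≤ n ∧ i = k * (n + 1) + j :=
    ⟨i / (n + 1), i % (n + 1), Nat.le_of_lt_succ (Nat.mod_lt _ n.succ_pos),
      (Nat.div_add_mod' i (n + 1)).symm⟩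
  rcases hj.lt_or_eq with hj | rfl
  · exact not_differentiableAt_nestedZigzag_innerZero hw hV hj (k := k) (by nlinarith)
  · exact not_differentiableAt_nestedZigzag_innerKink hw hV hn (k := k) (by nlinarith)

end NestedZigzag

/-! ### Network realization -/

theorem neg_one_pow_mul_zigzag_eq (z x : ℕ → ℝ) (m j : ℕ) (t : ℝ) :
    (-1) ^ j * zigzag z x m t =
      (∑ k : Fin m, (-1) ^ j * zigzagJump z x k * relu (1 * t + -x k))
        + (-1) ^ j * t + -((-1) ^ j * z 0) := by
  rw [zigzag, Finset.sum_range, mul_add, Finset.mul_sum]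
  simp only [one_mul, ← sub_eq_add_neg, mul_assoc]
  ring

theorem mul_nestedZigzag_eq (m n : ℕ) (w Z V : ℕ → ℝ) (s t : ℝ) :
    s * nestedZigzag m n w Z V t =
      (∑ j : Fin n, s * zigzagJump w Z j *
        relu ((-1) ^ (j : ℕ) * zigzag (column n V j) (column n V n) m t))
        + s * (1 + ∑ j : Fin n, zigzagJump w Z j * ((1 - (-1) ^ (j : ℕ)) / 2)) * t
        + -(s * (w 0 + ∑ j : Fin n, zigzagJump w Z j * ((1 - (-1) ^ (j : ℕ)) / 2) * Z j)) := by
  simp only [nestedZigzag, Finset.sum_range, mul_add, mul_sub, Finset.sum_add_distrib,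
    Finset.sum_sub_distrib, Finset.mul_sum, Finset.sum_mul, add_mul, mul_assoc]
  ring

theorem isReLU3_sum_smul_relu_nestedZigzag (n1 n2 n3 : ℕ) (w : Fin n3 → ℕ → ℝ) (Z V : ℕ → ℝ)
    (s a : Fin n3 → ℝ) :
    IsReLU3 n1 n2 n3 (∑ r, a r • fun t => relu (s r * nestedZigzag n1 n2 (w r) Z V t)) := by
  refine ⟨fun _ => 1, fun k => -column n2 V n2 k,
    fun j k => (-1) ^ (j : ℕ) * zigzagJump (column n2 V j) (column n2 V n2) k,
    fun j => (-1) ^ (j : ℕ), fun j => -((-1) ^ (j : ℕ) * column n2 V j 0),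
    fun r j => s r * zigzagJump (w r) Z j,
    fun r => s r * (1 + ∑ j : Fin n2, zigzagJump (w r) Z j * ((1 - (-1) ^ (j : ℕ)) / 2)),
    fun r => -(s r * (w r 0 +
      ∑ j : Fin n2, zigzagJump (w r) Z j * ((1 - (-1) ^ (j : ℕ)) / 2) * Z j)),
    a, 0, 0, fun t => ?_⟩
  simp only [← neg_one_pow_mul_zigzag_eq, ← mul_nestedZigzag_eq, Finset.sum_apply, Pi.smul_apply,
    smul_eq_mul, zero_mul, zero_add]

/-! ### Choice of signs and outer weights -/

theorem exists_notMem_forall_not {α β : Type*} [Fintype α] {bad : α → β → Prop} {T : Finset β}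
    (hT : ∀ p ∈ T, ∀ e e', bad e p → bad e' p → e = e') {E : Finset α}
    (hcard : E.card + T.card < Fintype.card α) : ∃ e ∉ E, ∀ p ∈ T, ¬ bad e p := by
  classical
  by_contra! hbad
  have hle : Eᶜ.card ≤ T.card :=
    Finset.card_le_card_of_forall_subsingleton bad (fun e he => hbad e (Finset.mem_compl.1 he))
      fun p hp e he e' he' => hT p hp e e' he.2 he'.2
  rw [Finset.card_compl] at hle
  lia

theorem exists_signs_forall_not_differentiableAt_relu {ι : Type*} [Fintype ι] {h : ι → ℝ → ℝ}
    {S : Set ℝ} {T : Finset ℝ} (hcont : ∀ r, Continuous (h r))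
    (hS : ∀ p ∈ S, ∀ r, ¬ DifferentiableAt ℝ (h r) p)
    (hsign : ∀ p ∈ S, p ∉ T → ∃ u : ℤˣ, ∀ r, 0 < (u : ℤ) * h r p)
    (hcard : T.card + 2 < 2 ^ Fintype.card ι) :
    ∃ e : ι → ℤˣ, ∀ p ∈ S, ∃ r, ¬ DifferentiableAt ℝ (fun t => relu ((e r : ℤ) * h r t)) p := by
  classical
  let bad (e : ι → ℤˣ) (p : ℝ) : Prop :=
    p ∈ S ∧ ∀ r, DifferentiableAt ℝ (fun t => relu ((e r : ℤ) * h r t)) p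
  have hbad : ∀ p ∈ T, ∀ e e', bad e p → bad e' p → e = e' := fun p _ e e' he he' =>
    funext fun r => units_eq_of_differentiableAt_relu (hS p he.1 r) (he.2 r) (he'.2 r)
  have hlt : ({1, -1} : Finset (ι → ℤˣ)).card + T.card < Fintype.card (ι → ℤˣ) := by
    have := Finset.card_le_two (a := (1 : ι → ℤˣ)) (b := -1)
    rw [Fintype.card_fun, Fintype.card_units_int]
    lia
  obtain ⟨e, he, heT⟩ := exists_notMem_forall_not hbad hlt
  refine ⟨e, fun p hp => ?_⟩
  by_contra! hdiff
  obtain ⟨u, hu⟩ := hsign p hp fun hpT => heT p hpT ⟨hp, hdiff⟩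
  have hclip (r : ι) : DifferentiableAt ℝ (fun t => relu (((-u : ℤˣ) : ℤ) * h r t)) p :=
    differentiableAt_relu_comp_of_neg (by fun_prop) (by simpa using hu r)
  have heu : e = fun _ => -u := funext fun r =>
    units_eq_of_differentiableAt_relu (hS p hp r) (hdiff r) (hclip r)
  rcases Int.units_eq_one_or u with rfl | rfl <;> simp [heu, funext_iff] at he

section OuterWeights

variable (𝕜 : Type*) [NontriviallyNormedField 𝕜] {E F ι : Type*} [NormedAddCommGroup E]
  [NormedSpace 𝕜 E] [NormedAddCommGroup F] [NormedSpace 𝕜 F]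

/-- The subspace of functions differentiable at `p`. -/
def differentiableAtSubmodule (p : E) : Submodule 𝕜 (E → F) where
  carrier := {f | DifferentiableAt 𝕜 f p}
  add_mem' hf hg := hf.add hg
  zero_mem' := differentiableAt_const 0
  smul_mem' c _ hf := hf.const_smul c

variable {𝕜}

theorem exists_forall_not_differentiableAt_sum_smul [Fintype ι] {g : ι → E → F} {S : Finset E}
    (hg : ∀ p ∈ S, ∃ r, ¬ DifferentiableAt 𝕜 (g r) p) :
    ∃ a : ι → 𝕜, ∀ p ∈ S, ¬ DifferentiableAt 𝕜 (∑ r, a r • g r) p := by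
  classical
  let W (p : E) : Submodule 𝕜 (ι → 𝕜) :=
    (differentiableAtSubmodule 𝕜 p).comap (Fintype.linearCombination 𝕜 g)
  have hW : ⊤ ∉ S.image W := by
    intro htop
    obtain ⟨p, hp, hWp⟩ := Finset.mem_image.1 htop
    obtain ⟨r, hr⟩ := hg p hp
    have hsingle : Pi.single r 1 ∈ W p := hWp ▸ Submodule.mem_top
    rw [Submodule.mem_comap, Fintype.linearCombination_apply_single, one_smul] at hsingle
    exact hr hsingle
  have := NontriviallyNormedField.infinite 𝕜
  obtain ⟨a, ha⟩ := (Set.ne_univ_iff_exists_notMem _).1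
    (Subspace.biUnion_ne_univ_of_top_notMem hW)
  simp only [Finset.mem_image, Set.mem_iUnion, not_exists] at ha
  exact ⟨a, fun p hp hdiff => ha _ ⟨p, hp, rfl⟩ hdiff⟩

end OuterWeights

/-! ### Placement of the breakpoints -/

theorem exists_strictMono_of_finset (S : Finset ℝ) :
    ∃ Y : ℕ → ℝ, StrictMono Y ∧ ∀ p ∈ S, ∃ i < S.card, Y i = p := by
  obtain ⟨B, hB⟩ := S.bddAbove
  let e := S.orderEmbOfFin rfl
  refine ⟨fun i => if h : i < S.card then e ⟨i, h⟩ else B + i,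
    strictMono_nat_of_lt_succ fun i => ?_, fun p hp => ?_⟩
  · split_ifs with hi hi' hi'
    · exact e.strictMono (Fin.mk_lt_mk.2 i.lt_succ_self)
    · have : e ⟨i, hi⟩ ≤ B := hB (S.orderEmbOfFin_mem rfl _)
      push_cast
      linarith [(i.cast_nonneg : (0 : ℝ) ≤ i)]
    · lia
    · push_cast
      linarith
  · obtain ⟨i, rfl⟩ : p ∈ Set.range e := by rwa [S.range_orderEmbOfFin rfl]
    exact ⟨i, i.2, by simp⟩

/-- The subsequence of `Y` of the breakpoints of the inner zigzags: every `(b + 1)`-st term at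
first, leaving room for the `b` outer zeros before each of `Z 0, …, Z n`, and every term after
`Z n = x 0`. -/
def innerBreakpoints (n b : ℕ) (Y : ℕ → ℝ) (i : ℕ) : ℝ := Y (i + b * (min i n + 1))

section Placement

variable {n b i N : ℕ} {Y : ℕ → ℝ}

theorem strictMono_innerBreakpoints (hY : StrictMono Y) :
    StrictMono (innerBreakpoints n b Y) := fun i j hij =>
  hY (add_lt_add_of_lt_of_le hij (by gcongr))

theorem column_eq_innerBreakpoints (hi : i ≤ n) : column b Y b i = innerBreakpoints n b Y i := by
  rw [column, innerBreakpoints, min_eq_left hi]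
  congr 1
  ring

theorem eq_column_or_eq_innerBreakpoints (hi : i < N + b * (n + 1)) (hN : n < N) :
    (∃ r < b, ∃ k ≤ n, Y i = column b Y r k) ∨ ∃ k < N, Y i = innerBreakpoints n b Y k := by
  rcases lt_or_ge i ((n + 1) * (b + 1)) with hlt | hge
  · have hk : i / (b + 1) ≤ n := Nat.le_of_lt_succ ((Nat.div_lt_iff_lt_mul b.succ_pos).2 hlt)
    have hcol : Y i = column b Y (i % (b + 1)) (i / (b + 1)) := by
      rw [column, Nat.div_add_mod']
    rcases (Nat.le_of_lt_succ (Nat.mod_lt i b.succ_pos)).lt_or_eq with hr | hr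
    · exact .inl ⟨_, hr, _, hk, hcol⟩
    · rw [hr, column_eq_innerBreakpoints hk] at hcol
      exact .inr ⟨_, hk.trans_lt hN, hcol⟩
  · obtain ⟨q, rfl⟩ := Nat.exists_eq_add_of_le hge
    refine .inr ⟨n + 1 + q, by linarith, ?_⟩
    rw [innerBreakpoints, min_eq_right (by lia)]
    congr 1
    ring

end Placement

theorem le_two_pow_of_logb_le {M n : ℕ} (h : Real.logb 2 M ≤ n) : M ≤ 2 ^ n := by
  rcases M.eq_zero_or_pos with rfl | hM
  · exact Nat.zero_le _
  · rw [Real.logb_le_iff_le_rpow one_lt_two (Nat.cast_pos.2 hM), Real.rpow_natCast] at h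
    exact_mod_cast h

theorem three_layer_prescribed_breakpoints_general (n1 n2 n3 : ℕ) (hn1 : 1 ≤ n1) (hn2 : 2 ≤ n2)
    (hn3 : n1 * (n2 + 1) + 1 < 2 ^ n3) (S : Finset ℝ)
    (hS : S.card ≤ n2 * n3 + n1 * n2 + n1 + n2 + n3) :
    ∃ f : ℝ → ℝ, IsReLU3 n1 n2 n3 f ∧ ∀ p ∈ S, ¬ DifferentiableAt ℝ f p := by
  obtain ⟨Y, hY, hSY⟩ := exists_strictMono_of_finset S
  let V := innerBreakpoints n2 n3 Y
  let Z := column n3 Y n3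
  let N := n1 * (n2 + 1) + n2
  let h (r : Fin n3) := nestedZigzag n1 n2 (column n3 Y r) Z V
  have hV : StrictMono V := strictMono_innerBreakpoints hY
  have hZ : ∀ j ≤ n2, Z j = V j := fun j hj => column_eq_innerBreakpoints hj
  have hw (r : Fin n3) : Interlacing (column n3 Y r) Z := interlacing_column hY r.2
  have hkink : ∀ i < N, ∀ r, ¬ DifferentiableAt ℝ (h r) (V i) := fun i hi r =>
    not_differentiableAt_nestedZigzag (hw r) hV hn2 hi
  have hsign : ∀ i ≤ n2, ∃ u : ℤˣ, ∀ r, 0 < (u : ℤ) * h r (V i) := fun i hi =>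
    ⟨(-1) ^ i, fun r => by
      simpa [hZ i hi] using neg_one_pow_mul_nestedZigzag_pos (m := n1) (hw r) hV hZ hi⟩
  have hcard : ((Finset.Ico (n2 + 1) N).image V).card + 2 < 2 ^ Fintype.card (Fin n3) := by
    have := (Finset.card_image_le (s := Finset.Ico (n2 + 1) N) (f := V)).trans_eq (Nat.card_Ico _ _)
    rw [Fintype.card_fin]
    have := Nat.mul_le_mul_right (n2 + 1) hn1
    lia
  obtain ⟨e, he⟩ := exists_signs_forall_not_differentiableAt_relu (h := h) (S := V '' Set.Iio N)
    (by fun_prop) (by simpa using hkink) (by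
      rintro _ ⟨i, hi, rfl⟩ hiT
      exact hsign i (not_lt.1 fun hlt =>
        hiT (Finset.mem_image_of_mem V (Finset.mem_Ico.2 ⟨hlt, hi⟩))))
    hcard
  have hcover : ∀ p ∈ S, ∃ r, ¬ DifferentiableAt ℝ (fun t => relu ((e r : ℤ) * h r t)) p := by
    intro p hp
    obtain ⟨i, hi, rfl⟩ := hSY p hp
    rcases eq_column_or_eq_innerBreakpoints (n := n2) (b := n3) (N := N) (Y := Y) (i := i)
        (by lia) (by lia) with ⟨r, hr, k, hk, hik⟩ | ⟨k, hk, hik⟩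
    · exact ⟨⟨r, hr⟩, hik ▸ not_differentiableAt_relu_nestedZigzag_zero (hw _) hV hZ hk (by simp)⟩
    · exact hik ▸ he _ ⟨k, hk, rfl⟩
  obtain ⟨a, ha⟩ := exists_forall_not_differentiableAt_sum_smul (𝕜 := ℝ) hcover
  exact ⟨_, isReLU3_sum_smul_relu_nestedZigzag n1 n2 n3 _ Z V _ a, ha⟩

/-- for `n₁ ≥ 1`, `n₂ ≥ 2`, `n₃ ≥ log₂(n₁ + (n₁+1)n₂)` and any
`N = n₂n₃ + n₁n₂ + n₁ + n₂ + n₃` prescribed pairwise distinct real numbers, there is a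
three-hidden-layer network `f₄ ∈ Y_{n₁,n₂,n₃}` possessing all of them as breakpoints;
in particular `f₄` is not differentiable at each of them. -/
theorem three_layer_prescribed_breakpoints (n1 n2 n3 : ℕ)
    (hn1 : 1 ≤ n1) (hn2 : 2 ≤ n2)
    (hn3 : Real.logb 2 ((n1 : ℝ) + ((n1 : ℝ) + 1) * (n2 : ℝ)) ≤ (n3 : ℝ))
    (y : Fin (n2 * n3 + n1 * n2 + n1 + n2 + n3) → ℝ) (hy : StrictMono y) :
    ∃ f : ℝ → ℝ, IsReLU3 n1 n2 n3 f ∧ ∀ i, ¬ DifferentiableAt ℝ f (y i) := by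
  have hpow : n1 + (n1 + 1) * n2 ≤ 2 ^ n3 := le_two_pow_of_logb_le (by exact_mod_cast hn3)
  obtain ⟨f, hf, hSf⟩ := three_layer_prescribed_breakpoints_general n1 n2 n3 hn1 hn2
    (by lia) (Finset.univ.image y) (Finset.card_image_le.trans_eq (by simp))
  exact ⟨f, hf, fun i => hSf _ (by simp)⟩
end
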